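/- arXiv:0901.2822 — 5 statements merged into one kernel-verified Lean document; each statement's English description precedes it below -/
import Mathlib

section
/- Let p ∈ ℝ³, let l ≥ 3, and let q₀, …, q_{l−1} ∈ ℝ³ (indices taken modulo l) be points such that for every i the vectors qᵢ − p and q_{i+1} − p are linearly independent. Let nᵢ := ((qᵢ − p) × (q_{i+1} − p)) / ‖(qᵢ − p) × (q_{i+1} − p)‖ denote the unit normal of the triangle with vertices p, qᵢ, q_{i+1}, and let γᵢ := ∠(qᵢ − p, q_{i+1} − p) ∈ (0, π) be the interior angle of that triangle at p. Suppose there exist a unit vector u ∈ ℝ³ and φ ∈ [0, π) such that ∠(nᵢ, u) ≤ φ for all i. Then the discrete Gauss curvature (angle defect) K_p := 2π − ∑_{i=0}^{l−1} γᵢ satisfies K_p ≤ 2π(1 − cos φ). -/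
/-- The cross product on Euclidean 3-space. -/
noncomputable def cross3 (a b : EuclideanSpace ℝ (Fin 3)) : EuclideanSpace ℝ (Fin 3) :=
  (WithLp.equiv 2 (Fin 3 → ℝ)).symm
    ![a 1 * b 2 - a 2 * b 1, a 2 * b 0 - a 0 * b 2, a 0 * b 1 - a 1 * b 0]

namespace GCB

lemma trig_aux (c : ℝ) (hc : 0 < c) (hc1 : c ≤ 1) (s : ℝ) (hs : 0 ≤ s) (hs2 : s ≤ Real.pi / 2) :
    0 ≤ c * Real.cos (c * s) * Real.sin s - Real.sin (c * s) * Real.cos s := by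
  set f : ℝ → ℝ := fun s => c * Real.cos (c * s) * Real.sin s - Real.sin (c * s) * Real.cos s
    with hf
  have hd : ∀ x, HasDerivAt f ((1 - c ^ 2) * (Real.sin (c * x) * Real.sin x)) x := by
    intro x
    have h0 : HasDerivAt (fun x : ℝ => c * x) c x := by
      simpa using (hasDerivAt_id x).const_mul c
    have h1 := ((h0.cos.const_mul c).mul (Real.hasDerivAt_sin x)).sub
      (h0.sin.mul (Real.hasDerivAt_cos x))
    refine h1.congr_deriv ?_
    ring
  have hm : MonotoneOn f (Set.Icc 0 (Real.pi / 2)) := by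
    apply monotoneOn_of_deriv_nonneg (convex_Icc _ _)
    · exact fun x _ => (hd x).continuousAt.continuousWithinAt
    · exact fun x _ => (hd x).differentiableAt.differentiableWithinAt
    · intro x hx
      rw [interior_Icc] at hx
      rw [(hd x).deriv]
      have hx0 := hx.1
      have hx1 := hx.2
      have hpi := Real.pi_pos
      have : 0 ≤ Real.sin (c * x) :=
        Real.sin_nonneg_of_nonneg_of_le_pi (by positivity) (by nlinarith)
      have : 0 ≤ Real.sin x :=
        Real.sin_nonneg_of_nonneg_of_le_pi hx0.le (by linarith)
      have : 0 ≤ 1 - c ^ 2 := by nlinarith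
      positivity
  have := hm (Set.left_mem_Icc.2 (by linarith)) ⟨hs, hs2⟩ hs
  simpa [hf] using this

lemma arg_le (c γ R : ℝ) (z : ℂ) (hc : 0 < c) (hc1 : c ≤ 1) (hγ : 0 ≤ γ) (hγ' : γ ≤ Real.pi)
    (hR : 0 < R)
    (hre : R * (c ^ 2 * Real.cos (γ / 2) ^ 2 - Real.sin (γ / 2) ^ 2) ≤ z.re)
    (him : z.im = R * (c * Real.sin γ)) (hpos : 0 < z.im) : c * z.arg ≤ γ := by
  have hz : z ≠ 0 := by rintro rfl; simp at hpos
  by_contra hcon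
  push Not at hcon
  have hpi := Complex.arg_le_pi z
  have hlt : γ / c < z.arg := by rw [div_lt_iff₀ hc]; linarith
  have hge : 0 ≤ γ / c := by positivity
  obtain ⟨s, hs⟩ : ∃ s, s = γ / c / 2 := ⟨_, rfl⟩
  have hcs : c * s = γ / 2 := by rw [hs]; field_simp
  have h2s : γ / c = 2 * s := by rw [hs]; ring
  rw [h2s] at hlt hge
  have hs0 : 0 ≤ s := by linarith
  have hs1 : s ≤ Real.pi / 2 := by linarith
  have key := trig_aux c hc hc1 s hs0 hs1
  rw [hcs] at key
  have hsin := Real.sin_pos_of_pos_of_lt_pi (sub_pos.2 hlt) (by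
    rcases lt_or_eq_of_le hpi with h | h
    · linarith
    · have : z.im = 0 := (Complex.arg_eq_pi_iff.1 h).2
      linarith)
  rw [Real.sin_sub] at hsin
  have hn : 0 < ‖z‖ := norm_pos_iff.2 hz
  have h1 := Complex.norm_mul_cos_arg z
  have h2 := Complex.norm_mul_sin_arg z
  have h3 : 0 < z.im * Real.cos (2 * s) - z.re * Real.sin (2 * s) := by
    rw [← h1, ← h2]; nlinarith
  have hS : 0 ≤ Real.sin s := Real.sin_nonneg_of_nonneg_of_le_pi hs0 (by linarith)
  have hC : 0 ≤ Real.cos s := Real.cos_nonneg_of_neg_pi_div_two_le_of_le (by linarith) hs1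
  have hS2 : 0 ≤ Real.sin (γ/2) := Real.sin_nonneg_of_nonneg_of_le_pi (by linarith) (by linarith)
  have hC2 : 0 ≤ Real.cos (γ/2) :=
    Real.cos_nonneg_of_neg_pi_div_two_le_of_le (by linarith) (by linarith)
  have hsg : Real.sin γ = 2 * Real.sin (γ/2) * Real.cos (γ/2) := by
    rw [← Real.sin_two_mul]; ring_nf
  rw [him, hsg, Real.sin_two_mul, Real.cos_two_mul'] at h3
  have h4 := mul_le_mul_of_nonneg_right hre (show 0 ≤ 2 * Real.sin s * Real.cos s by positivity)
  have h5 : 0 ≤ R * (2 * (c * Real.cos (γ/2) * Real.sin s - Real.sin (γ/2) * Real.cos s) *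
    (c * Real.cos (γ/2) * Real.cos s + Real.sin (γ/2) * Real.sin s)) := by positivity
  nlinarith

abbrev E := EuclideanSpace ℝ (Fin 3)

noncomputable def Z (u x y : E) : ℂ :=
  ⟨inner ℝ x y - inner ℝ x u * inner ℝ y u, inner ℝ (cross3 x y) u⟩

lemma inner3 (x y : E) : inner ℝ x y = x 0 * y 0 + x 1 * y 1 + x 2 * y 2 := by
  simp [PiLp.inner_apply, Fin.sum_univ_three]; ring

lemma c30 (x y : E) : cross3 x y 0 = x 1 * y 2 - x 2 * y 1 := rfl
lemma c31 (x y : E) : cross3 x y 1 = x 2 * y 0 - x 0 * y 2 := rfl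
lemma c32 (x y : E) : cross3 x y 2 = x 0 * y 1 - x 1 * y 0 := rfl

lemma innerC (x y u : E) : inner ℝ (cross3 x y) u = (x 1 * y 2 - x 2 * y 1) * u 0
    + (x 2 * y 0 - x 0 * y 2) * u 1 + (x 0 * y 1 - x 1 * y 0) * u 2 := by
  rw [inner3]; rfl

lemma Z_mul (u a x y : E) (hu : inner ℝ u u = (1 : ℝ)) :
    (starRingEnd ℂ) (Z u a x) * Z u a y = ((Z u a a).re : ℂ) * Z u x y := by
  rw [inner3] at hu
  apply Complex.ext
  · simp only [Complex.mul_re, Complex.mul_im, Complex.conj_re, Complex.conj_im,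
      Complex.ofReal_re, Complex.ofReal_im, Z, inner3, c30, c31, c32]
    generalize a 0 = a0, a 1 = a1, a 2 = a2, u 0 = u0, u 1 = u1, u 2 = u2 at hu ⊢
    generalize x 0 = x0, x 1 = x1, x 2 = x2, y 0 = y0, y 1 = y1, y 2 = y2
    linear_combination ((a0 * a0 + a1 * a1 + a2 * a2) * (x0 * y0 + x1 * y1 + x2 * y2)
      - (a0 * x0 + a1 * x1 + a2 * x2) * (a0 * y0 + a1 * y1 + a2 * y2)) * hu
  · simp only [Complex.mul_re, Complex.mul_im, Complex.conj_re, Complex.conj_im,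
      Complex.ofReal_re, Complex.ofReal_im, Z, inner3, c30, c31, c32]
    generalize a 0 = a0, a 1 = a1, a 2 = a2, u 0 = u0, u 1 = u1, u 2 = u2 at hu ⊢
    generalize x 0 = x0, x 1 = x1, x 2 = x2, y 0 = y0, y 1 = y1, y 2 = y2
    linear_combination (-1 * ((a0 * x0 + a1 * x1 + a2 * x2) *
      ((a1 * y2 - a2 * y1) * u0 + (a2 * y0 - a0 * y2) * u1
        + (a0 * y1 - a1 * y0) * u2)
      - (a0 * y0 + a1 * y1 + a2 * y2) *
      ((a1 * x2 - a2 * x1) * u0 + (a2 * x0 - a0 * x2) * u1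
        + (a0 * x1 - a1 * x0) * u2)
      - (a0 * a0 + a1 * a1 + a2 * a2) *
      ((x1 * y2 - x2 * y1) * u0 + (x2 * y0 - x0 * y2) * u1
        + (x0 * y1 - x1 * y0) * u2))) * hu

lemma gram_aux (u x y : E) (hu : inner ℝ u u = (1 : ℝ))
    (hlag : ‖cross3 x y‖ ^ 2 = ‖x‖ ^ 2 * ‖y‖ ^ 2 - (inner ℝ x y) ^ 2) :
    (inner ℝ (cross3 x y) u) ^ 2 = ‖cross3 x y‖ ^ 2 - ‖x‖ ^ 2 * (inner ℝ y u) ^ 2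
      - ‖y‖ ^ 2 * (inner ℝ x u) ^ 2 + 2 * inner ℝ x u * inner ℝ y u * inner ℝ x y := by
    have hu3 := hu
    rw [inner3] at hu3
    rw [hlag, ← real_inner_self_eq_norm_sq, ← real_inner_self_eq_norm_sq]
    simp only [inner3, c30, c31, c32]
    linear_combination ((x 0 * x 0 + x 1 * x 1 + x 2 * x 2) * (y 0 * y 0 + y 1 * y 1 + y 2 * y 2)
      - (x 0 * y 0 + x 1 * y 1 + x 2 * y 2) ^ 2) * hu3

set_option maxHeartbeats 1000000 in
lemma edge (u x y : E) (hu : ‖u‖ = 1) (k : ℝ) (hk : 0 < k)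
    (h : k * ‖cross3 x y‖ ≤ inner ℝ (cross3 x y) u) (hC0 : cross3 x y ≠ 0) :
    k * (Z u x y).arg ≤ InnerProductGeometry.angle x y ∧ 0 < (Z u x y).im := by
  have hCn : 0 < ‖cross3 x y‖ := norm_pos_iff.2 hC0
  have him : 0 < (Z u x y).im := lt_of_lt_of_le (by positivity) h
  refine ⟨?_, him⟩
  have hx : x ≠ 0 := by
    rintro rfl; apply hC0; ext i; fin_cases i <;> simp [cross3]
  have hy : y ≠ 0 := by
    rintro rfl; apply hC0; ext i; fin_cases i <;> simp [cross3]
  have hxn : 0 < ‖x‖ := norm_pos_iff.2 hx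
  have hyn : 0 < ‖y‖ := norm_pos_iff.2 hy
  set γ := InnerProductGeometry.angle x y with hγ
  have hcos : Real.cos γ * (‖x‖ * ‖y‖) = inner ℝ x y :=
    InnerProductGeometry.cos_angle_mul_norm_mul_norm x y
  have hsin0 : 0 ≤ Real.sin γ := InnerProductGeometry.sin_angle_nonneg x y
  have hlag : ‖cross3 x y‖ ^ 2 = ‖x‖ ^ 2 * ‖y‖ ^ 2 - (inner ℝ x y) ^ 2 := by
    rw [← real_inner_self_eq_norm_sq, ← real_inner_self_eq_norm_sq, ← real_inner_self_eq_norm_sq]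
    rw [innerC]
    simp only [inner3, cross3]
    simp
    ring
  have hsc := Real.sin_sq_add_cos_sq γ
  have hsin : ‖cross3 x y‖ = ‖x‖ * ‖y‖ * Real.sin γ := by
    rw [← sq_eq_sq₀ hCn.le (by positivity), hlag, ← hcos]
    linear_combination (‖x‖ ^ 2 * ‖y‖ ^ 2) * (-hsc)
  have hspos : 0 < Real.sin γ := by
    rw [hsin] at hCn
    exact pos_of_mul_pos_right hCn (by positivity)
  obtain ⟨c, hcd⟩ : ∃ c, c = inner ℝ (cross3 x y) u / ‖cross3 x y‖ := ⟨_, rfl⟩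
  have hc : inner ℝ (cross3 x y) u = c * ‖cross3 x y‖ := by rw [hcd]; field_simp
  have hkc : k ≤ c := by rw [hcd, le_div_iff₀ hCn]; exact h
  have hc0 : 0 < c := by linarith
  have hc1 : c ≤ 1 := by
    rw [hcd, div_le_one hCn]
    have := real_inner_le_norm (cross3 x y) u
    rwa [hu, mul_one] at this
  obtain ⟨α, hα⟩ : ∃ α, inner ℝ x u = ‖x‖ * α := ⟨inner ℝ x u / ‖x‖, by field_simp⟩
  obtain ⟨β, hβ⟩ : ∃ β, inner ℝ y u = ‖y‖ * β := ⟨inner ℝ y u / ‖y‖, by field_simp⟩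
  have hu2 : inner ℝ u u = (1 : ℝ) := by rw [real_inner_self_eq_norm_sq, hu]; norm_num
  have gram := gram_aux u x y hu2 hlag
  rw [hc, hα, hβ, hsin, ← hcos] at gram
  have g2 : c ^ 2 * Real.sin γ ^ 2 = Real.sin γ ^ 2 - β ^ 2 - α ^ 2
      + 2 * α * β * Real.cos γ := by
    have : (‖x‖ * ‖y‖) ^ 2 ≠ 0 := by positivity
    apply mul_left_cancel₀ this
    linear_combination gram
  have hcl : Real.cos γ < 1 := by nlinarith [Real.cos_le_one γ]
  have hab : α * β ≤ (1 - c ^ 2) * (1 + Real.cos γ) / 2 := by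
    have : (1 - Real.cos γ) * (α * β) ≤ (1 - Real.cos γ) * ((1 - c ^ 2) * (1 + Real.cos γ) / 2) := by
      have hs2 : Real.sin γ ^ 2 = (1 - Real.cos γ) * (1 + Real.cos γ) := by linarith
      rw [hs2] at g2
      nlinarith [sq_nonneg (α - β)]
    exact le_of_mul_le_mul_left this (by linarith)
  have hct : Real.cos (γ / 2) ^ 2 = (1 + Real.cos γ) / 2 := by
    rw [Real.cos_sq]; ring_nf
  have hst : Real.sin (γ / 2) ^ 2 = (1 - Real.cos γ) / 2 := by
    rw [Real.sin_sq, hct]; ring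
  have hR : 0 < ‖x‖ * ‖y‖ := by positivity
  have main := arg_le c γ (‖x‖ * ‖y‖) (Z u x y) hc0 hc1
    (InnerProductGeometry.angle_nonneg x y) (InnerProductGeometry.angle_le_pi x y)
    hR (by
      have e : (Z u x y).re = ‖x‖ * ‖y‖ * (Real.cos γ - α * β) := by
        simp only [Z]; rw [hα, hβ, ← hcos]; ring
      rw [e]
      apply mul_le_mul_of_nonneg_left _ hR.le
      rw [hct, hst]
      linarith) (by
      have e : (Z u x y).im = c * ‖cross3 x y‖ := hc
      rw [e, hsin]; ring) him
  have harg : 0 ≤ (Z u x y).arg := Complex.arg_nonneg_iff.2 him.le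
  nlinarith

lemma sum_arg (l : ℕ) [NeZero l] (u : E) (x : ZMod l → E) (hu : inner ℝ u u = (1 : ℝ))
    (him : ∀ i, 0 < (Z u (x i) (x (i + 1))).im) :
    2 * Real.pi ≤ ∑ i, (Z u (x i) (x (i + 1))).arg := by
  set w : ZMod l → ℂ := fun i => Z u (x i) (x (i + 1)) with hw
  have hw0 : ∀ i, w i ≠ 0 := fun i h => by
    have := him i
    have h' : (w i).im = 0 := by rw [h]; simp
    exact absurd h' this.ne'
  have hargpos : ∀ i, 0 < (w i).arg := fun i => by
    have h1 : 0 ≤ (w i).arg := Complex.arg_nonneg_iff.2 (him i).le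
    refine lt_of_le_of_ne h1 fun h => ?_
    have := (Complex.arg_eq_zero_iff.1 h.symm).2
    exact absurd this (him i).ne'
  set a := x 0
  obtain ⟨N, hN⟩ : ∃ N, N = (Z u a a).re := ⟨_, rfl⟩
  have hprod : (N : ℂ) ^ l * ∏ i, w i = ((∏ i, Complex.normSq (Z u a (x i)) : ℝ) : ℂ) := by
    have h1 : ∀ i, (N : ℂ) * w i = (starRingEnd ℂ) (Z u a (x i)) * Z u a (x (i + 1)) :=
      fun i => by rw [hN]; exact (Z_mul u a (x i) (x (i + 1)) hu).symm
    have h2 : ∏ i : ZMod l, Z u a (x (i + 1)) = ∏ i, Z u a (x i) :=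
      Equiv.prod_comp (Equiv.addRight (1 : ZMod l)) (fun i => Z u a (x i))
    calc (N : ℂ) ^ l * ∏ i, w i = ∏ i, ((N : ℂ) * w i) := by
          rw [Finset.prod_mul_distrib]; simp [ZMod.card]
      _ = ∏ i, ((starRingEnd ℂ) (Z u a (x i)) * Z u a (x (i + 1))) :=
          Finset.prod_congr rfl fun i _ => h1 i
      _ = _ := by
          rw [Finset.prod_mul_distrib, h2, ← Finset.prod_mul_distrib]
          push_cast
          exact Finset.prod_congr rfl fun i _ => (Complex.normSq_eq_conj_mul_self).symm
  have hNpos : 0 < N := by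
    have hz := Z_mul u a (x 1) (x 1) hu
    have h0 : Z u a (x 1) ≠ 0 := by have := hw0 0; simpa [hw] using this
    have hn := Complex.normSq_pos.2 h0
    rw [← Complex.normSq_eq_conj_mul_self, ← hN] at hz
    have hz' := congrArg Complex.re hz
    simp at hz'
    have hNne : N ≠ 0 := by rintro h; rw [h] at hz'; simp at hz'; exact h0 hz'
    have hge : 0 ≤ N := by
      have := real_inner_mul_inner_self_le a u
      rw [hu] at this
      rw [hN]; simp only [Z]; linarith
    exact lt_of_le_of_ne hge hNne.symm
  have hexp : (∏ i, w i) = ((∏ i, ‖w i‖ : ℝ) : ℂ) *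
      Complex.exp ((∑ i, (w i).arg : ℝ) * Complex.I) := by
    push_cast
    rw [Finset.sum_mul, Complex.exp_sum, ← Finset.prod_mul_distrib]
    exact Finset.prod_congr rfl fun i _ => (Complex.norm_mul_exp_arg_mul_I (w i)).symm
  set S := ∑ i, (w i).arg with hS
  have hSpos : 0 < S := Finset.sum_pos (fun i _ => hargpos i) Finset.univ_nonempty
  have hM : 0 < ∏ i, ‖w i‖ := Finset.prod_pos fun i _ => norm_pos_iff.2 (hw0 i)
  have hP : 0 ≤ ∏ i, Complex.normSq (Z u a (x i)) :=
    Finset.prod_nonneg fun i _ => Complex.normSq_nonneg _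
  rw [hexp] at hprod
  have hNl : 0 < N ^ l * ∏ i, ‖w i‖ := by positivity
  have hprod2 : ((N ^ l * ∏ i, ‖w i‖ : ℝ) : ℂ) * Complex.exp (S * Complex.I) =
      ((∏ i, Complex.normSq (Z u a (x i)) : ℝ) : ℂ) := by
    rw [← hprod]; push_cast; ring
  have hre := congrArg Complex.re hprod2
  have him2 := congrArg Complex.im hprod2
  rw [Complex.re_ofReal_mul, Complex.exp_ofReal_mul_I_re, Complex.ofReal_re] at hre
  rw [Complex.im_ofReal_mul, Complex.exp_ofReal_mul_I_im, Complex.ofReal_im] at him2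
  have hs0 : Real.sin S = 0 := by
    rcases mul_eq_zero.1 him2 with h | h
    · exact absurd h hNl.ne'
    · exact h
  have hc0 : 0 ≤ Real.cos S := by
    rw [← hre] at hP
    exact nonneg_of_mul_nonneg_right hP hNl
  have hc1 : Real.cos S = 1 := by
    have := Real.sin_sq_add_cos_sq S
    rw [hs0] at this
    nlinarith
  by_contra hlt
  push Not at hlt
  have := (Real.cos_eq_one_iff_of_lt_of_lt (by linarith) hlt).1 hc1
  linarith

end GCB

/-- If the unit normals `nᵢ` of the triangles `(p, qᵢ, q_{i+1})` of a
vertex star all make an angle at most `φ < π` with a fixed unit direction `u`, then the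
angle defect `2π − ∑ γᵢ` at `p` is at most `2π(1 − cos φ)`. -/
theorem gauss_curvature_bound (l : ℕ) (hl : 3 ≤ l) [NeZero l]
    (p : EuclideanSpace ℝ (Fin 3)) (q : ZMod l → EuclideanSpace ℝ (Fin 3))
    (hind : ∀ i : ZMod l, LinearIndependent ℝ ![q i - p, q (i + 1) - p])
    (u : EuclideanSpace ℝ (Fin 3)) (hu : ‖u‖ = 1)
    (φ : ℝ) (hφ0 : 0 ≤ φ) (hφπ : φ < Real.pi)
    (hangle : ∀ i : ZMod l,
      InnerProductGeometry.angle
        ((‖cross3 (q i - p) (q (i + 1) - p)‖)⁻¹ • cross3 (q i - p) (q (i + 1) - p)) u ≤ φ) :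
    2 * Real.pi - ∑ i : ZMod l, InnerProductGeometry.angle (q i - p) (q (i + 1) - p)
      ≤ 2 * Real.pi * (1 - Real.cos φ) := by
  have hpi := Real.pi_pos
  suffices h : 2 * Real.pi * Real.cos φ ≤
      ∑ i : ZMod l, InnerProductGeometry.angle (q i - p) (q (i + 1) - p) by linarith
  rcases le_or_gt (Real.cos φ) 0 with hc | hc
  · have : 0 ≤ ∑ i : ZMod l, InnerProductGeometry.angle (q i - p) (q (i + 1) - p) :=
      Finset.sum_nonneg fun i _ => InnerProductGeometry.angle_nonneg _ _
    nlinarith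
  have hedge : ∀ i, Real.cos φ * (GCB.Z u (q i - p) (q (i + 1) - p)).arg ≤
      InnerProductGeometry.angle (q i - p) (q (i + 1) - p) ∧
      0 < (GCB.Z u (q i - p) (q (i + 1) - p)).im := by
    intro i
    have hcos := Real.cos_le_cos_of_nonneg_of_le_pi
      (InnerProductGeometry.angle_nonneg _ _) hφπ.le (hangle i)
    have hC0 : cross3 (q i - p) (q (i + 1) - p) ≠ 0 := by
      intro h
      rw [h] at hcos
      simp at hcos
      linarith
    have hCn := norm_pos_iff.2 hC0
    refine GCB.edge u _ _ hu _ hc ?_ hC0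
    rw [InnerProductGeometry.angle_smul_left_of_pos _ _ (by positivity),
      InnerProductGeometry.cos_angle, hu, mul_one, le_div_iff₀ hCn] at hcos
    exact hcos
  have hu2 : inner ℝ u u = (1 : ℝ) := by rw [real_inner_self_eq_norm_sq, hu]; norm_num
  have hsum := GCB.sum_arg l u (fun i => q i - p) hu2 fun i => (hedge i).2
  calc 2 * Real.pi * Real.cos φ
      ≤ Real.cos φ * ∑ i, (GCB.Z u (q i - p) (q (i + 1) - p)).arg := by
        rw [mul_comm]; exact mul_le_mul_of_nonneg_left hsum hc.le
    _ = ∑ i, Real.cos φ * (GCB.Z u (q i - p) (q (i + 1) - p)).arg := Finset.mul_sum _ _ _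
    _ ≤ _ := Finset.sum_le_sum fun i _ => (hedge i).1
end

section
/- Let ρ ≥ 1 and let e, f ∈ ℝ³ be nonzero vectors with ‖f‖ ≤ ρ‖e‖ and ‖e‖·‖f‖ ≤ ρ‖e × f‖ (in particular e and f are linearly independent, so e ≠ f). Then ‖(f − e) × f‖ ≥ ‖f − e‖·‖f‖ / (2ρ²); equivalently, the angle α := ∠(f − e, f), which is the angle opposite the edge e at the vertex f in the triangle with vertices 0, e, f, satisfies sin α ≥ 1/(2ρ²). -/
/-- Shape regularity bounds the sine of the angle opposite the
edge `e` at the vertex `f` from below by `1/(2ρ²)`: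
`‖(f − e) × f‖ ≥ ‖f − e‖·‖f‖/(2ρ²)`. -/
theorem opposite_angle_sine_bound (ρ : ℝ) (hρ : 1 ≤ ρ)
    (e f : EuclideanSpace ℝ (Fin 3)) (he : e ≠ 0) (hf : f ≠ 0)
    (hlen : ‖f‖ ≤ ρ * ‖e‖) (hreg : ‖e‖ * ‖f‖ ≤ ρ * ‖cross3 e f‖) :
    ‖f - e‖ * ‖f‖ / (2 * ρ ^ 2) ≤ ‖cross3 (f - e) f‖ := by
  have hc : cross3 (f - e) f = -cross3 e f := by
    ext i
    fin_cases i <;> simp [cross3] <;> ring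
  rw [hc, norm_neg, div_le_iff₀ (by positivity)]
  have h1 : ‖f - e‖ ≤ 2 * ρ * ‖e‖ := by
    have := norm_sub_le f e
    nlinarith [norm_nonneg e]
  calc ‖f - e‖ * ‖f‖ ≤ 2 * ρ * ‖e‖ * ‖f‖ := by gcongr
    _ = 2 * ρ * (‖e‖ * ‖f‖) := by ring
    _ ≤ 2 * ρ * (ρ * ‖cross3 e f‖) := by gcongr
    _ = ‖cross3 e f‖ * (2 * ρ ^ 2) := by ring
end

section
/- Let δ > 0 and let α, β ∈ (0, π) be angles with α ≥ δ, β ≥ δ, and α + β ≤ π − δ. Then cot α + cot β ≥ sin δ. -/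
/-- For a δ-Delaunay pair of angles `α, β ∈ (0, π)` with `α ≥ δ`,
`β ≥ δ` and `α + β ≤ π − δ`, one has `cot α + cot β ≥ sin δ`. -/
theorem cot_add_cot_ge_sin (δ α β : ℝ) (hδ : 0 < δ)
    (hα0 : 0 < α) (hαπ : α < Real.pi) (hβ0 : 0 < β) (hβπ : β < Real.pi)
    (hαδ : δ ≤ α) (hβδ : δ ≤ β) (hsum : α + β ≤ Real.pi - δ) :
    Real.sin δ ≤ Real.cot α + Real.cot β := by
  have ha := Real.sin_pos_of_pos_of_lt_pi hα0 hαπ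
  have hb := Real.sin_pos_of_pos_of_lt_pi hβ0 hβπ
  have h1 : Real.sin δ ≤ Real.sin (α + β) := by
    have h := Real.sin_sub_sin (α + β) δ
    have h2 : 0 ≤ Real.sin ((α + β - δ) / 2) :=
      Real.sin_nonneg_of_nonneg_of_le_pi (by linarith) (by linarith)
    have h3 : 0 ≤ Real.cos ((α + β + δ) / 2) :=
      Real.cos_nonneg_of_neg_pi_div_two_le_of_le (by linarith) (by linarith)
    have h4 := mul_nonneg h2 h3
    linarith
  have h0 : 0 ≤ Real.sin δ :=
    Real.sin_nonneg_of_nonneg_of_le_pi hδ.le (by linarith)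
  have hp : Real.sin α * Real.sin β ≤ 1 :=
    mul_le_one₀ (Real.sin_le_one α) hb.le (Real.sin_le_one β)
  rw [Real.cot_eq_cos_div_sin, Real.cot_eq_cos_div_sin, div_add_div _ _ ha.ne' hb.ne',
    le_div_iff₀ (mul_pos ha hb)]
  rw [Real.sin_add] at h1
  have h5 := mul_le_mul_of_nonneg_left hp h0
  linarith
end

section
/- Let ρ ≥ 1, ε > 0, and let e₁, e₂, e₃, e₄ ∈ ℝ³ (indices taken modulo 4) be vectors such that for every i: ε/ρ ≤ ‖eᵢ‖ ≤ ε and ‖eᵢ‖·‖e_{i+1}‖ ≤ ρ‖eᵢ × e_{i+1}‖. For each i, let αᵢ := ∠(e_{i−1} − eᵢ, e_{i−1}) and βᵢ := ∠(e_{i+1} − eᵢ, e_{i+1}) be the two angles opposing the edge eᵢ in the triangles conv{0, eᵢ, e_{i−1}} and conv{0, eᵢ, e_{i+1}}. If the angle defect satisfies 2π − ∑_{i=1}^{4} ∠(eᵢ, e_{i+1}) ≤ 1/ρ², then there exist at least three indices i ∈ {1,2,3,4} such that αᵢ ≥ 1/(2ρ²), βᵢ ≥ 1/(2ρ²), and αᵢ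 + βᵢ ≤ π − 1/(2ρ²). -/
open InnerProductGeometry in
lemma cross3_norm_aux (a b : EuclideanSpace ℝ (Fin 3)) :
    ‖cross3 a b‖ = ‖a‖ * ‖b‖ * Real.sin (angle a b) := by
  rw [← norm_ofLp_crossProduct, cross_apply]
  rfl

open InnerProductGeometry in
lemma low_aux (ρ ε : ℝ) (hρ : 1 ≤ ρ) (hε : 0 < ε) (x y : EuclideanSpace ℝ (Fin 3))
    (hx : ε / ρ ≤ ‖x‖) (hx' : ‖x‖ ≤ ε) (hy' : ‖y‖ ≤ ε)
    (hs : 1 / ρ ≤ Real.sin (angle x y)) :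
    1 / (2 * ρ ^ 2) ≤ angle (y - x) y := by
  have h := sin_angle_mul_norm_eq_sin_angle_mul_norm x y
  have h1 : angle y (x - y) = Real.pi - angle (y - x) y := by
    rw [← neg_sub y x, angle_neg_right, angle_comm]
  rw [h1, Real.sin_pi_sub] at h
  have h2 : ‖x - y‖ ≤ 2 * ε := (norm_sub_le x y).trans (by linarith)
  have h3 : Real.sin (angle (y - x) y) ≤ angle (y - x) y := Real.sin_le (angle_nonneg _ _)
  have h4 : 0 ≤ Real.sin (angle (y - x) y) := sin_angle_nonneg _ _
  have hρ0 : 0 < ρ := by linarith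
  have h5 : 1 / ρ * (ε / ρ) ≤ Real.sin (angle x y) * ‖x‖ :=
    mul_le_mul hs hx (by positivity) (sin_angle_nonneg _ _)
  have h6 := mul_le_mul_of_nonneg_left h2 h4
  refine le_trans ?_ h3
  have h7 : 1 / (2 * ρ ^ 2) * (2 * ε) ≤ Real.sin (angle (y - x) y) * (2 * ε) := by
    calc _ = 1 / ρ * (ε / ρ) := by field_simp
      _ ≤ _ := by linarith
  exact le_of_mul_le_mul_right h7 (by positivity)

lemma count_aux (f : Fin 4 → ℝ) (δ P : ℝ) (hf : ∀ i, 2 * δ ≤ f i)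
    (hsum : ∑ i, f i ≤ 2 * P + 2 * δ) :
    ∃ s : Finset (Fin 4), 3 ≤ s.card ∧ ∀ i ∈ s, f i ≤ P - δ := by
  rw [Fin.sum_univ_four] at hsum
  by_cases h : ∃ i, P - δ < f i
  · obtain ⟨i, hi⟩ := h
    refine ⟨Finset.univ.erase i, by simp, fun j hj => ?_⟩
    have hj : j ≠ i := Finset.ne_of_mem_erase hj
    by_contra! hc
    have h0 := hf 0
    have h1 := hf 1
    have h2 := hf 2
    have h3 := hf 3
    fin_cases i <;> fin_cases j <;> simp at hj hi hc <;> linarith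
  · push Not at h
    exact ⟨Finset.univ, by simp, fun i _ => h i⟩

lemma count_zmod_aux (f : ZMod 4 → ℝ) (δ P : ℝ) (hf : ∀ i, 2 * δ ≤ f i)
    (hsum : ∑ i, f i ≤ 2 * P + 2 * δ) :
    ∃ s : Finset (ZMod 4), 3 ≤ s.card ∧ ∀ i ∈ s, f i ≤ P - δ :=
  count_aux f δ P hf hsum

/-- At a valence-four vertex (at the origin) of a vertex star with
shape regularity `ρ`, edge lengths in `[ε/ρ, ε]`, and angle defect at most `1/ρ²`,
at least three of the four edges are `(1/(2ρ²))`-Delaunay. -/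
theorem three_delta_delaunay_edges (ρ ε : ℝ) (hρ : 1 ≤ ρ) (hε : 0 < ε)
    (e : ZMod 4 → EuclideanSpace ℝ (Fin 3))
    (hlen : ∀ i, ε / ρ ≤ ‖e i‖ ∧ ‖e i‖ ≤ ε)
    (hreg : ∀ i, ‖e i‖ * ‖e (i + 1)‖ ≤ ρ * ‖cross3 (e i) (e (i + 1))‖)
    (hdefect :
      2 * Real.pi - ∑ i : ZMod 4, InnerProductGeometry.angle (e i) (e (i + 1)) ≤ 1 / ρ ^ 2) :
    ∃ s : Finset (ZMod 4), 3 ≤ s.card ∧ ∀ i ∈ s,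
      1 / (2 * ρ ^ 2) ≤ InnerProductGeometry.angle (e (i - 1) - e i) (e (i - 1)) ∧
      1 / (2 * ρ ^ 2) ≤ InnerProductGeometry.angle (e (i + 1) - e i) (e (i + 1)) ∧
      InnerProductGeometry.angle (e (i - 1) - e i) (e (i - 1)) +
          InnerProductGeometry.angle (e (i + 1) - e i) (e (i + 1))
        ≤ Real.pi - 1 / (2 * ρ ^ 2) := by
  have hρ0 : 0 < ρ := by linarith
  have hpos : ∀ i, 0 < ‖e i‖ := fun i => lt_of_lt_of_le (by positivity) (hlen i).1
  have hs : ∀ i, 1 / ρ ≤ Real.sin (InnerProductGeometry.angle (e i) (e (i + 1))) := by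
    intro i
    have h := hreg i
    rw [cross3_norm_aux] at h
    have hp : 0 < ‖e i‖ * ‖e (i + 1)‖ := mul_pos (hpos _) (hpos _)
    rw [div_le_iff₀ hρ0]
    refine le_of_mul_le_mul_left ?_ hp
    linarith
  have hβ : ∀ i, 1 / (2 * ρ ^ 2) ≤ InnerProductGeometry.angle (e (i + 1) - e i) (e (i + 1)) :=
    fun i => low_aux ρ ε hρ hε _ _ (hlen i).1 (hlen i).2 (hlen _).2 (hs i)
  have hα : ∀ i, 1 / (2 * ρ ^ 2) ≤ InnerProductGeometry.angle (e (i - 1) - e i) (e (i - 1)) := by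
    intro i
    refine low_aux ρ ε hρ hε _ _ (hlen i).1 (hlen i).2 (hlen _).2 ?_
    have := hs (i - 1)
    rwa [sub_add_cancel, InnerProductGeometry.angle_comm] at this
  have htri : ∀ i, InnerProductGeometry.angle (e i) (e (i + 1))
      + InnerProductGeometry.angle (e i - e (i + 1)) (e i)
      + InnerProductGeometry.angle (e (i + 1) - e i) (e (i + 1)) = Real.pi := by
    intro i
    have := InnerProductGeometry.angle_add_angle_sub_add_angle_sub_eq_pi (e i)
      (norm_pos_iff.1 (hpos (i + 1)))
    rwa [InnerProductGeometry.angle_comm (e i) (e i - e (i + 1)),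
      InnerProductGeometry.angle_comm (e (i + 1)) (e (i + 1) - e i)] at this
  have hd : 1 / ρ ^ 2 = 2 * (1 / (2 * ρ ^ 2)) := by field_simp
  rw [hd] at hdefect
  have key : ∑ i : ZMod 4, (InnerProductGeometry.angle (e (i - 1) - e i) (e (i - 1)) +
          InnerProductGeometry.angle (e (i + 1) - e i) (e (i + 1)))
      ≤ 2 * Real.pi + 2 * (1 / (2 * ρ ^ 2)) := by
    have h1 : ∑ i : ZMod 4, InnerProductGeometry.angle (e (i - 1) - e i) (e (i - 1))
        = ∑ i : ZMod 4, InnerProductGeometry.angle (e i - e (i + 1)) (e i) := by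
      rw [← Equiv.sum_comp (Equiv.addRight (1 : ZMod 4))]
      simp
    have h2 := Finset.sum_congr (rfl : (Finset.univ : Finset (ZMod 4)) = Finset.univ)
      (fun i _ => htri i)
    rw [Finset.sum_add_distrib, Finset.sum_add_distrib] at h2
    rw [Finset.sum_add_distrib, h1]
    simp only [Finset.sum_const, Finset.card_univ, ZMod.card, nsmul_eq_mul] at h2
    push_cast at h2
    linarith
  obtain ⟨s, hs3, hsP⟩ := count_zmod_aux
    (fun i : ZMod 4 => InnerProductGeometry.angle (e (i - 1) - e i) (e (i - 1)) +
          InnerProductGeometry.angle (e (i + 1) - e i) (e (i + 1))) (1 / (2 * ρ ^ 2)) Real.pi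
    (fun i => by have := hα i; have := hβ i; linarith)
    key
  exact ⟨s, hs3, fun i hi => ⟨hα i, hβ i, hsP i hi⟩⟩
end

section
/- Let K > 0 and ε > 0, and let h : ℝ² → ℝ be twice continuously differentiable on the closed ball B̄(0, ε) with h(0) = 0 and Dh(0) = 0. Suppose that for every x ∈ B̄(0, ε) one has ‖Dh(x)‖ ≤ tan(1/2), and for every unit vector v ∈ ℝ², |D²h(x)(v, v)| ≤ K·(1 + ‖Dh(x)‖²)^{3/2}. Then |h(x)| ≤ K‖x‖² for all x ∈ B̄(0, ε). -/
/-- Graph form of the normal-component estimate: if `h` is `C²` on the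
closed ball of radius `ε`, vanishes to first order at `0`, has gradient bounded by
`tan(1/2)`, and its second directional derivatives satisfy the normal-curvature bound
`|D²h(x)(v,v)| ≤ K(1 + ‖Dh(x)‖²)^{3/2}` for unit vectors `v`, then `|h(x)| ≤ K‖x‖²`. -/
theorem height_function_bound (K ε : ℝ) (hK : 0 < K) (hε : 0 < ε)
    (h : EuclideanSpace ℝ (Fin 2) → ℝ)
    (hcd : ContDiffOn ℝ 2 h (Metric.closedBall 0 ε))
    (h0 : h 0 = 0)
    (hD0 : fderivWithin ℝ h (Metric.closedBall 0 ε) 0 = 0)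
    (hD : ∀ x ∈ Metric.closedBall (0 : EuclideanSpace ℝ (Fin 2)) ε,
      ‖fderivWithin ℝ h (Metric.closedBall 0 ε) x‖ ≤ Real.tan (1 / 2))
    (hD2 : ∀ x ∈ Metric.closedBall (0 : EuclideanSpace ℝ (Fin 2)) ε,
      ∀ v : EuclideanSpace ℝ (Fin 2), ‖v‖ = 1 →
        |iteratedFDerivWithin ℝ 2 h (Metric.closedBall 0 ε) x ![v, v]|
          ≤ K * (1 + ‖fderivWithin ℝ h (Metric.closedBall 0 ε) x‖ ^ 2) ^ ((3 : ℝ) / 2)) :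
    ∀ x ∈ Metric.closedBall (0 : EuclideanSpace ℝ (Fin 2)) ε, |h x| ≤ K * ‖x‖ ^ 2 := by
  intro x hx
  set s := Metric.closedBall (0 : EuclideanSpace ℝ (Fin 2)) ε with hs
  have hu : UniqueDiffOn ℝ s := by
    apply uniqueDiffOn_convex (convex_closedBall _ _)
    rw [interior_closedBall _ hε.ne']
    exact ⟨0, Metric.mem_ball_self hε⟩
  have hF : ContDiffOn ℝ 1 (fderivWithin ℝ h s) s := hcd.fderivWithin hu (by norm_num)
  have hcos : (7 : ℝ) / 8 ≤ Real.cos (1 / 2) := by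
    have := Real.one_sub_sq_div_two_le_cos (x := 1 / 2)
    norm_num at this ⊢
    linarith
  have hconst : (1 + Real.tan (1 / 2) ^ 2) ^ ((3 : ℝ) / 2) ≤ 2 := by
    have hc : 0 < Real.cos (1 / 2) := by linarith
    have h1 : 1 + Real.tan (1 / 2) ^ 2 ≤ (8 / 7) ^ (2 : ℝ) := by
      have h3 : 1 + Real.tan (1 / 2) ^ 2 = (Real.cos (1 / 2) ^ 2)⁻¹ := by
        rw [← Real.inv_one_add_tan_sq hc.ne', inv_inv]
      rw [h3, inv_le_comm₀ (by positivity) (by positivity)]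
      norm_num
      nlinarith
    calc (1 + Real.tan (1 / 2) ^ 2) ^ ((3 : ℝ) / 2)
        ≤ ((8 / 7 : ℝ) ^ (2 : ℝ)) ^ ((3 : ℝ) / 2) :=
          Real.rpow_le_rpow (by positivity) h1 (by norm_num)
      _ = (8 / 7 : ℝ) ^ (3 : ℝ) := by
          rw [← Real.rpow_mul (by norm_num)]; norm_num
      _ ≤ 2 := by norm_num
  have hbd : ∀ y ∈ s, |fderivWithin ℝ (fderivWithin ℝ h s) s y x x| ≤ 2 * K * ‖x‖ ^ 2 := by
    intro y hy
    rcases eq_or_ne x 0 with rfl | hx0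
    · simp
    have hn : 0 < ‖x‖ := norm_pos_iff.2 hx0
    have h2 := hD2 y hy (‖x‖⁻¹ • x) (by
      rw [norm_smul, norm_inv, norm_norm, inv_mul_cancel₀ hn.ne'])
    rw [iteratedFDerivWithin_two_apply _ hu hy] at h2
    have h3 : K * (1 + ‖fderivWithin ℝ h s y‖ ^ 2) ^ ((3 : ℝ) / 2) ≤ K * 2 := by
      refine mul_le_mul_of_nonneg_left (le_trans ?_ hconst) hK.le
      have := hD y hy
      gcongr
    have h4 := h2.trans h3
    simp only [Matrix.cons_val_zero, Matrix.cons_val_one, map_smul,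
      ContinuousLinearMap.smul_apply, smul_eq_mul, abs_mul, abs_inv, abs_norm] at h4
    have h5 := mul_le_mul_of_nonneg_left h4 (sq_nonneg ‖x‖)
    have h6 : ∀ a : ℝ, ‖x‖ ^ 2 * (‖x‖⁻¹ * (‖x‖⁻¹ * a)) = a := by
      intro a; field_simp
    rw [h6] at h5
    linarith
  have hmaps : Set.MapsTo (fun t : ℝ => t • x) (Set.Icc 0 1) s := by
    intro t ht
    simp only [hs, mem_closedBall_zero_iff] at hx ⊢
    rw [norm_smul, Real.norm_of_nonneg ht.1]
    nlinarith [ht.1, ht.2, norm_nonneg x]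
  have hline : ∀ t : ℝ, HasDerivWithinAt (fun t : ℝ => t • x) x (Set.Icc 0 1) t := by
    intro t
    simpa using ((hasDerivAt_id t).smul_const x).hasDerivWithinAt
  have hg : ∀ t ∈ Set.Icc (0 : ℝ) 1,
      HasDerivWithinAt (fun t : ℝ => h (t • x)) (fderivWithin ℝ h s (t • x) x) (Set.Icc 0 1) t := by
    intro t ht
    have hd := ((hcd.differentiableOn (by norm_num)) _ (hmaps ht)).hasFDerivWithinAt
    exact hd.comp_hasDerivWithinAt t (hline t) hmaps
  have hg' : ∀ t ∈ Set.Icc (0 : ℝ) 1,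
      HasDerivWithinAt (fun t : ℝ => fderivWithin ℝ h s (t • x) x)
        (fderivWithin ℝ (fderivWithin ℝ h s) s (t • x) x x) (Set.Icc 0 1) t := by
    intro t ht
    have hd := ((hF.differentiableOn (by norm_num)) _ (hmaps ht)).hasFDerivWithinAt
    have := hd.comp_hasDerivWithinAt t (hline t) hmaps
    simpa using this.clm_apply (hasDerivWithinAt_const t _ x)
  have b1 : ∀ t ∈ Set.Icc (0 : ℝ) 1,
      ‖fderivWithin ℝ h s (t • x) x‖ ≤ 2 * K * ‖x‖ ^ 2 * t := by
    intro t ht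
    refine image_norm_le_of_norm_deriv_right_le_deriv_boundary
      (f := fun t : ℝ => fderivWithin ℝ h s (t • x) x)
      (B := fun t => 2 * K * ‖x‖ ^ 2 * t) (B' := fun _ => 2 * K * ‖x‖ ^ 2)
      (fun t ht => (hg' t ht).continuousWithinAt)
      (fun t ht => (hg' t (Set.Ico_subset_Icc_self ht)).mono_of_mem_nhdsWithin
        (Icc_mem_nhdsGE_of_mem ht)) ?_ ?_ ?_ ht
    · simp [hD0]
    · intro t
      simpa using (hasDerivAt_id t).const_mul (2 * K * ‖x‖ ^ 2)
    · intro t ht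
      exact hbd _ (hmaps (Set.Ico_subset_Icc_self ht))
  have b2 := image_norm_le_of_norm_deriv_right_le_deriv_boundary
      (f := fun t : ℝ => h (t • x)) (a := 0) (b := 1)
      (B := fun t => K * ‖x‖ ^ 2 * t ^ 2) (B' := fun t => 2 * K * ‖x‖ ^ 2 * t)
      (fun t ht => (hg t ht).continuousWithinAt)
      (fun t ht => (hg t (Set.Ico_subset_Icc_self ht)).mono_of_mem_nhdsWithin
        (Icc_mem_nhdsGE_of_mem ht)) (by simp [h0])
      (fun t => by
        have := (hasDerivAt_pow 2 t).const_mul (K * ‖x‖ ^ 2)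
        refine this.congr_deriv ?_
        norm_num
        ring)
      (fun t ht => b1 t (Set.Ico_subset_Icc_self ht))
      (Set.right_mem_Icc.2 zero_le_one)
  simpa using b2
end
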